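/- Let k ≥ 1, ℓ ≥ 1, N ≥ 1, and let F be a linearly closed differential field of characteristic zero with constants C. Consider the families of elements s^{m_0,…,m_k}_{i_0,…,i_k} ∈ F, indexed by i_0,…,i_k ∈ {1,…,ℓ} and by tuples (m_0,…,m_k) ∈ {0,…,N}^{k+1} whose non-increasing rearrangement satisfies μ_0 − μ_1 = 1, which are skewsymmetric with respect to simultaneous permutations of upper and lower indices (s^{m_{σ(0)},…,m_{σ(k)}}_{i_{σ(0)},…,i_{σ(k)}} = sign(σ)·s^{m_0,…,m_k}_{i_0,…,i_k} for all σ ∈ S_{k+1}) and which satisfy, for all i_0,…,i_k ∈ {1,…,ℓ}, the equation Σ_{(m_0,…,m_k)} Λ₀^{m_0}(λ_1^{m_1}⋯λ_k^{m_k} · s^{m_0,…,m_k}_{i_0,…,i_k}) = 0 in F[λ_1,…,λ_k]. These families form a vector space over C of dimension D = Σ_{n=0}^{N−1} ( binom((n+1)ℓ, k+1) − binom(nℓ, k+1) − ℓ·binom(nℓ, k) ). -/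

import Mathlib

/-- A derivation on a field: an additive map satisfying the Leibniz rule. -/
structure IsDerivation {F : Type*} [Field F] (d : F → F) : Prop where
  map_add : ∀ a b : F, d (a + b) = d a + d b
  leibniz : ∀ a b : F, d (a * b) = d a * b + a * d b

/-- A differential field `(F, d)` is linearly closed if every linear differential equation
`a_M d^M u + ⋯ + a_1 d u + a_0 u = b` with `a_M ≠ 0` has a solution in `F`,
and has a nonzero solution for `b = 0`, provided that `M ≥ 1`. -/
def LinearlyClosed {F : Type*} [Field F] (d : F → F) : Prop :=
  ∀ (M : ℕ) (a : ℕ → F), a M ≠ 0 →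
    (∀ b : F, ∃ u : F, ∑ n ∈ Finset.range (M + 1), a n * d^[n] u = b) ∧
    (1 ≤ M → ∃ u : F, u ≠ 0 ∧ ∑ n ∈ Finset.range (M + 1), a n * d^[n] u = 0)

/-- The derivation `∂̂` of `F[λ_1,…,λ_k]` acting as `d` on coefficients and annihilating
the variables. -/
noncomputable def coeffDer {F : Type*} [Field F] (d : F → F) {k : ℕ}
    (Q : MvPolynomial (Fin k) F) : MvPolynomial (Fin k) F :=
  ∑ m ∈ Q.support, (MvPolynomial.monomial m) (d (MvPolynomial.coeff m Q))

/-- `Λ₀(Q) = −(λ_1+⋯+λ_k)·Q − ∂̂(Q)`. -/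
noncomputable def lamZero {F : Type*} [Field F] (d : F → F) {k : ℕ} :
    MvPolynomial (Fin k) F → MvPolynomial (Fin k) F :=
  fun Q => -((∑ a : Fin k, MvPolynomial.X a) * Q) - coeffDer d Q

/-- A tuple `(m_0,…,m_k)` of natural numbers whose non-increasing rearrangement
`(μ_0,…,μ_k)` satisfies `μ_0 − μ_1 = 1`. -/
def gapOne (k : ℕ) (m : Fin (k + 1) → ℕ) : Prop :=
  ∃ σ : Equiv.Perm (Fin (k + 1)), Antitone (fun j => m (σ j)) ∧ m (σ 0) = m (σ 1) + 1

theorem aux_exp_rank {C V : Type*} [Field C] [CharZero C] [AddCommGroup V] [Module C V]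
    (D X A : Module.End C V) (h1 : D * X = X * D + 1) (h2 : Commute A D) (h3 : Commute A X)
    (hA : IsNilpotent A) :
    Module.rank C (LinearMap.ker (D + A)) = Module.rank C (LinearMap.ker D) := by
  obtain ⟨K, hK⟩ := hA
  set Z : Module.End C V := -(X * A) with hZ
  have hAZ : Commute A Z := by
    rw [hZ]; exact (h3.mul_right (Commute.refl A)).neg_right
  have hDZ : D * Z = Z * D - A := by
    have h2' : A * D = D * A := h2
    rw [hZ, mul_neg, ← mul_assoc, h1, neg_mul, mul_assoc, h2', add_mul, one_mul, mul_assoc]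
    abel
  have hZK : Z ^ K = 0 := by
    rw [hZ, neg_pow, h3.symm.mul_pow, hK]; simp
  have hDZn : ∀ n : ℕ, D * Z ^ (n+1) = Z ^ (n+1) * D - ((n+1 : ℕ) : C) • (A * Z ^ n) := by
    intro n
    induction n with
    | zero => simp [hDZ]
    | succ n ih =>
      rw [pow_succ Z (n+1), ← mul_assoc, ih, sub_mul, mul_assoc (Z^(n+1)) D Z, hDZ, mul_sub,
        ← (hAZ.pow_right (n+1)).eq, ← mul_assoc (Z^(n+1)) Z D, smul_mul_assoc, mul_assoc A (Z^n) Z,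
        ← pow_succ Z n, sub_sub]
      congr 1
      push_cast
      module
  set e : Module.End C V := ∑ n ∈ Finset.range (K+1), ((n.factorial : C)⁻¹) • Z ^ n with he
  have he' : e = ∑ n ∈ Finset.range K, ((n.factorial : C)⁻¹) • Z ^ n := by
    rw [he, Finset.sum_range_succ, hZK]; simp
  have hmain : (D + A) * e = e * D := by
    have : D * e = e * D - A * e := by
      conv_rhs => rw [he', ← he']
      conv_rhs => arg 2; rw [he']
      rw [he, Finset.mul_sum, Finset.sum_mul, Finset.mul_sum, Finset.sum_range_succ' _ K,
        Finset.sum_range_succ' _ K, add_sub_right_comm, ← Finset.sum_sub_distrib]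
      congr 1
      · apply Finset.sum_congr rfl
        intro n _
        rw [mul_smul_comm, hDZn, smul_sub, smul_smul, smul_mul_assoc, mul_smul_comm]
        congr 2
        rw [Nat.factorial_succ]
        have : ((n+1 : ℕ) : C) ≠ 0 := by exact_mod_cast n.succ_ne_zero
        have : ((n.factorial : ℕ) : C) ≠ 0 := by exact_mod_cast n.factorial_ne_zero
        push_cast at *
        field_simp
      · simp
    rw [add_mul, this]; abel
  have hu : IsUnit e := by
    rw [he, Finset.sum_range_succ']
    simp only [pow_zero, Nat.factorial_zero, Nat.cast_one, inv_one, one_smul]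
    refine IsNilpotent.isUnit_add_one ?_
    have : ∑ n ∈ Finset.range K, (((n+1).factorial : C)⁻¹) • Z ^ (n+1)
        = Z * ∑ n ∈ Finset.range K, (((n+1).factorial : C)⁻¹) • Z ^ n := by
      rw [Finset.mul_sum]
      apply Finset.sum_congr rfl; intro n _
      rw [mul_smul_comm, pow_succ']
    rw [this]
    refine Commute.isNilpotent_mul_right ?_ ⟨K, hZK⟩
    refine Commute.sum_right _ _ _ fun n _ => ?_
    exact ((Commute.refl Z).pow_right n).smul_right _
  obtain ⟨u, hu⟩ := hu
  have hinj : Function.Injective e := by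
    rw [← hu]
    exact ((Module.End.isUnit_iff _).1 u.isUnit).1
  have hsurj : Function.Surjective e := by
    rw [← hu]
    exact ((Module.End.isUnit_iff _).1 u.isUnit).2
  have hk : LinearMap.ker (D + A) = (LinearMap.ker D).map e := by
    ext q
    simp only [LinearMap.mem_ker, Submodule.mem_map]
    constructor
    · intro hq
      obtain ⟨r, rfl⟩ := hsurj q
      refine ⟨r, ?_, rfl⟩
      have h := congrArg (fun f => f r) hmain
      simp only [Module.End.mul_apply] at h
      rw [hq] at h
      exact hinj (by rw [← h, map_zero])
    · rintro ⟨r, hr, rfl⟩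
      have h := congrArg (fun f => f r) hmain
      simp only [Module.End.mul_apply] at h
      rw [h, hr, map_zero]
  rw [hk]
  exact ((LinearMap.ker D).equivMapOfInjective e hinj).rank_eq.symm

theorem aux_d0 {F : Type*} [Field F] {d : F → F} (hd : IsDerivation d) : d 0 = 0 := by
  have := hd.map_add 0 0
  simpa using this

theorem aux_dneg {F : Type*} [Field F] {d : F → F} (hd : IsDerivation d) (a : F) :
    d (-a) = - d a := by
  have := hd.map_add a (-a)
  rw [add_neg_cancel, aux_d0 hd] at this
  exact (neg_eq_of_add_eq_zero_right this.symm).symm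

/-- decrement the `j`-th entry -/
def aux_dn {n : ℕ} (j : Fin n) (m : Fin n → ℕ) : Fin n → ℕ := Function.update m j (m j - 1)

/-- the operator `∂ + Σ λ_j` on coefficient functions -/
def aux_DF {F : Type*} [Field F] (d : F → F) {n : ℕ} (q : (Fin n → ℕ) → F) (m : Fin n → ℕ) : F :=
  d (q m) + ∑ j, if m j = 0 then 0 else q (aux_dn j m)

/-- coefficients -/
noncomputable def aux_cf {F : Type*} [Field F] {n : ℕ} (P : MvPolynomial (Fin n) F)
    (m : Fin n → ℕ) : F := MvPolynomial.coeff (Finsupp.equivFunOnFinite.symm m) P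

theorem aux_coeffDer {F : Type*} [Field F] {d : F → F} (hd : IsDerivation d) {k : ℕ}
    (Q : MvPolynomial (Fin k) F) (m : Fin k →₀ ℕ) :
    MvPolynomial.coeff m (coeffDer d Q) = d (MvPolynomial.coeff m Q) := by
  classical
  rw [coeffDer, MvPolynomial.coeff_sum]
  simp only [MvPolynomial.coeff_monomial]
  rw [Finset.sum_ite_eq']
  split_ifs with h
  · rfl
  · rw [MvPolynomial.notMem_support_iff.1 h, aux_d0 hd]

theorem aux_coeffDer_add {F : Type*} [Field F] {d : F → F} (hd : IsDerivation d) {k : ℕ}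
    (P Q : MvPolynomial (Fin k) F) :
    coeffDer d (P + Q) = coeffDer d P + coeffDer d Q := by
  ext m
  simp [aux_coeffDer hd, hd.map_add]

theorem aux_coeffDer_monomial {F : Type*} [Field F] {d : F → F} (hd : IsDerivation d) {k : ℕ}
    (m : Fin k →₀ ℕ) (a : F) :
    coeffDer d (MvPolynomial.monomial m a) = MvPolynomial.monomial m (d a) := by
  classical
  ext m'
  rw [aux_coeffDer hd]
  simp only [MvPolynomial.coeff_monomial]
  split_ifs <;> simp [aux_d0 hd]

/-- `∂ + Σ λ_j` -/
noncomputable def aux_BD {F : Type*} [Field F] {d : F → F} (hd : IsDerivation d) (k : ℕ) :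
    MvPolynomial (Fin k) F →+ MvPolynomial (Fin k) F :=
  AddMonoidHom.mk' (fun P => (∑ a, MvPolynomial.X a) * P + coeffDer d P) (by
    intro P Q
    simp only [aux_coeffDer_add hd]
    ring)

theorem aux_cf_BD {F : Type*} [Field F] {d : F → F} (hd : IsDerivation d) (k : ℕ)
    (P : MvPolynomial (Fin k) F) : aux_cf (aux_BD hd k P) = aux_DF d (aux_cf P) := by
  classical
  funext m
  simp only [aux_cf, aux_DF, aux_BD, AddMonoidHom.mk'_apply, MvPolynomial.coeff_add,
    aux_coeffDer hd, Finset.sum_mul, MvPolynomial.coeff_sum]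
  rw [add_comm]
  congr 1
  apply Finset.sum_congr rfl
  intro j _
  rw [MvPolynomial.coeff_X_mul']
  by_cases h : m j = 0
  · simp [h]
  · simp only [Finsupp.mem_support_iff, Finsupp.equivFunOnFinite_symm_apply_apply, ne_eq, h,
      not_false_eq_true, if_true, if_false]
    congr 1
    ext a
    by_cases ha : a = j
    · subst ha; simp [aux_dn]
    · simp [aux_dn, ha]

/-- `Λ₀` as additive map -/
noncomputable def aux_L {F : Type*} [Field F] {d : F → F} (hd : IsDerivation d) (k : ℕ) :
    AddMonoid.End (MvPolynomial (Fin k) F) :=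
  AddMonoidHom.mk' (lamZero d) (by
    intro P Q
    simp only [lamZero, aux_coeffDer_add hd]
    ring)

theorem aux_L_pow {F : Type*} [Field F] {d : F → F} (hd : IsDerivation d) (k n : ℕ)
    (P : MvPolynomial (Fin k) F) : (lamZero d)^[n] P = (aux_L hd k ^ n) P := by
  rw [AddMonoid.End.coe_pow]; rfl

theorem aux_Phi_sum {F : Type*} [Field F] {d : F → F} (hd : IsDerivation d) (k : ℕ)
    (P : MvPolynomial (Fin (k+1)) F) (S : Finset (Fin (k+1) →₀ ℕ)) (hS : P.support ⊆ S) :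
    ∑ m ∈ P.support, (aux_L hd k ^ (m 0)) (MvPolynomial.monomial m.tail (MvPolynomial.coeff m P))
     = ∑ m ∈ S, (aux_L hd k ^ (m 0)) (MvPolynomial.monomial m.tail (MvPolynomial.coeff m P)) := by
  apply Finset.sum_subset hS
  intro m _ hm
  rw [MvPolynomial.notMem_support_iff.1 hm]; simp

/-- evaluation `λ_0 ↦ Λ₀` -/
noncomputable def aux_Phi {F : Type*} [Field F] {d : F → F} (hd : IsDerivation d) (k : ℕ) :
    MvPolynomial (Fin (k+1)) F →+ MvPolynomial (Fin k) F :=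
  AddMonoidHom.mk' (fun P => ∑ m ∈ P.support,
    (aux_L hd k ^ (m 0)) (MvPolynomial.monomial m.tail (MvPolynomial.coeff m P))) (by
    classical
    intro P Q
    rw [aux_Phi_sum hd k P (P.support ∪ Q.support) Finset.subset_union_left,
      aux_Phi_sum hd k Q (P.support ∪ Q.support) Finset.subset_union_right,
      aux_Phi_sum hd k (P+Q) (P.support ∪ Q.support) MvPolynomial.support_add,
      ← Finset.sum_add_distrib]
    apply Finset.sum_congr rfl
    intro m _
    rw [MvPolynomial.coeff_add, map_add, map_add])

theorem aux_Phi_monomial {F : Type*} [Field F] {d : F → F} (hd : IsDerivation d) (k : ℕ)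
    (m : Fin (k+1) →₀ ℕ) (a : F) :
    aux_Phi hd k (MvPolynomial.monomial m a)
      = (aux_L hd k ^ (m 0)) (MvPolynomial.monomial m.tail a) := by
  classical
  rw [aux_Phi, AddMonoidHom.mk'_apply,
    aux_Phi_sum hd k _ {m} MvPolynomial.support_monomial_subset]
  simp

theorem aux_BD_monomial {F : Type*} [Field F] {d : F → F} (hd : IsDerivation d) (k : ℕ)
    (m : Fin (k+1) →₀ ℕ) (a : F) :
    aux_BD hd (k+1) (MvPolynomial.monomial m a)
      = MvPolynomial.monomial (m + Finsupp.single 0 1) a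
        + ∑ j : Fin k, MvPolynomial.monomial (m + Finsupp.single j.succ 1) a
        + MvPolynomial.monomial m (d a) := by
  simp only [aux_BD, AddMonoidHom.mk'_apply, aux_coeffDer_monomial hd,
    Fin.sum_univ_succ, MvPolynomial.X, add_mul, Finset.sum_mul, MvPolynomial.monomial_mul, one_mul,
    add_comm m]

theorem aux_tail_add {k : ℕ} (m : Fin (k+1) →₀ ℕ) : (m + Finsupp.single 0 1).tail = m.tail := by
  ext a; simp [Finsupp.tail_apply]

theorem aux_tail_add_succ {k : ℕ} (m : Fin (k+1) →₀ ℕ) (j : Fin k) :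
    (m + Finsupp.single j.succ 1).tail = m.tail + Finsupp.single j 1 := by
  ext a; simp [Finsupp.tail_apply, Finsupp.single_apply]

theorem aux_Phi_BD {F : Type*} [Field F] {d : F → F} (hd : IsDerivation d) (k : ℕ)
    (P : MvPolynomial (Fin (k+1)) F) : aux_Phi hd k (aux_BD hd (k+1) P) = 0 := by
  induction P using MvPolynomial.induction_on' with
  | add p q hp hq => rw [map_add, map_add, hp, hq, add_zero]
  | monomial m a =>
    rw [aux_BD_monomial, map_add, map_add, map_sum]
    simp only [aux_Phi_monomial, aux_tail_add, aux_tail_add_succ]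
    have h0 : (m + Finsupp.single 0 1 : Fin (k+1) →₀ ℕ) 0 = m 0 + 1 := by simp
    have hs : ∀ j : Fin k, (m + Finsupp.single j.succ 1 : Fin (k+1) →₀ ℕ) 0 = m 0 := by intro j; simp
    simp only [h0, hs]
    rw [pow_succ, AddMonoid.End.coe_mul, Function.comp_apply, ← map_sum, ← map_add, ← map_add]
    have hz : aux_L hd k (MvPolynomial.monomial m.tail a)
        + ∑ j : Fin k, MvPolynomial.monomial (m.tail + Finsupp.single j 1) a
        + MvPolynomial.monomial m.tail (d a) = 0 := by
      change lamZero d _ + _ + _ = 0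
      simp only [lamZero, aux_coeffDer_monomial hd,
        MvPolynomial.X, Finset.sum_mul, MvPolynomial.monomial_mul, one_mul, add_comm m.tail]
      abel
    rw [hz, map_zero]

theorem aux_div {F : Type*} [Field F] {d : F → F} (hd : IsDerivation d) (k : ℕ)
    (P : MvPolynomial (Fin (k+1)) F) :
    ∃ Q, P = MvPolynomial.rename Fin.succ (aux_Phi hd k P) + aux_BD hd (k+1) Q := by
  have hadd : ∀ p q : MvPolynomial (Fin (k+1)) F,
      (∃ Q, p = MvPolynomial.rename Fin.succ (aux_Phi hd k p) + aux_BD hd (k+1) Q) →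
      (∃ Q, q = MvPolynomial.rename Fin.succ (aux_Phi hd k q) + aux_BD hd (k+1) Q) →
      (∃ Q, p + q = MvPolynomial.rename Fin.succ (aux_Phi hd k (p + q)) + aux_BD hd (k+1) Q) := by
    rintro p q ⟨Q, hQ⟩ ⟨R, hR⟩
    refine ⟨Q + R, ?_⟩
    conv_lhs => rw [hQ, hR]
    simp only [map_add]
    abel
  have hneg : ∀ p : MvPolynomial (Fin (k+1)) F,
      (∃ Q, p = MvPolynomial.rename Fin.succ (aux_Phi hd k p) + aux_BD hd (k+1) Q) →
      (∃ Q, -p = MvPolynomial.rename Fin.succ (aux_Phi hd k (-p)) + aux_BD hd (k+1) Q) := by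
    rintro p ⟨Q, hQ⟩
    refine ⟨-Q, ?_⟩
    conv_lhs => rw [hQ]
    simp only [map_neg]
    abel
  have hsum : ∀ f : Fin k → MvPolynomial (Fin (k+1)) F,
      (∀ j, ∃ Q, f j = MvPolynomial.rename Fin.succ (aux_Phi hd k (f j)) + aux_BD hd (k+1) Q) →
      (∃ Q, ∑ j, f j = MvPolynomial.rename Fin.succ (aux_Phi hd k (∑ j, f j))
        + aux_BD hd (k+1) Q) := by
    intro f hf
    choose Q hQ using hf
    refine ⟨∑ j, Q j, ?_⟩
    simp only [map_sum]
    rw [← Finset.sum_add_distrib]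
    exact Finset.sum_congr rfl fun j _ => hQ j
  have hBD : ∀ p : MvPolynomial (Fin (k+1)) F,
      (∃ Q, aux_BD hd (k+1) p = MvPolynomial.rename Fin.succ (aux_Phi hd k (aux_BD hd (k+1) p))
        + aux_BD hd (k+1) Q) := by
    intro p
    refine ⟨p, ?_⟩
    rw [aux_Phi_BD, map_zero, zero_add]
  induction P using MvPolynomial.induction_on' with
  | add p q hp hq => exact hadd p q hp hq
  | monomial m a =>
    obtain ⟨n, hn⟩ : ∃ n, n = m 0 := ⟨_, rfl⟩
    induction n generalizing m a with
    | zero =>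
      refine ⟨0, ?_⟩
      rw [aux_Phi_monomial, ← hn, pow_zero, AddMonoid.End.coe_one, id, MvPolynomial.rename_monomial,
        map_zero, add_zero]
      congr 1
      congr 1
      ext i
      refine Fin.cases ?_ (fun i => ?_) i
      · rw [Finsupp.mapDomain_of_notMem_range _ _ (by simp)]; exact hn.symm
      · rw [Finsupp.mapDomain_apply (Fin.succ_injective k), Finsupp.tail_apply]
    | succ n ih =>
      set m' : Fin (k+1) →₀ ℕ := m - Finsupp.single 0 1 with hm'
      have hm : m = m' + Finsupp.single 0 1 := by
        ext i
        by_cases hi : i = 0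
        · subst hi; simp [hm']; omega
        · simp [hm', hi]
      have hm0 : m' 0 = n := by simp [hm']; omega
      have key : MvPolynomial.monomial m a = aux_BD hd (k+1) (MvPolynomial.monomial m' a)
          + -(∑ j : Fin k, MvPolynomial.monomial (m' + Finsupp.single j.succ 1) a
          + MvPolynomial.monomial m' (d a)) := by
        rw [aux_BD_monomial, ← hm]; abel
      rw [key]
      refine hadd _ _ (hBD _) (hneg _ (hadd _ _ (hsum _ fun j => ih _ _ ?_) (ih _ _ hm0.symm)))
      simp [hm0]

theorem aux_dn_upd {n : ℕ} (m : Fin n → ℕ) (j : Fin n) :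
    aux_dn j (Function.update m j (m j + 1)) = m := by
  simp [aux_dn]

/-- value of `DF` at `m + e_j` when all other terms vanish -/
theorem aux_DF_up {F : Type*} [Field F] {d : F → F} (hd : IsDerivation d) {n : ℕ}
    (q : (Fin n → ℕ) → F) (m : Fin n → ℕ) (j : Fin n)
    (h : ∀ m', m' j = m j + 1 → (∀ i, i ≠ j → m' i ≤ m i) → q m' = 0) :
    aux_DF d q (Function.update m j (m j + 1)) = q m := by
  rw [aux_DF, h _ (by simp) (by intro i hi; simp [hi]), aux_d0 hd, zero_add,
    Finset.sum_eq_single j]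
  · simp [aux_dn_upd]
  · intro i _ hi
    split_ifs with h0
    · rfl
    · apply h
      · simp [aux_dn, Ne.symm hi]
      · intro i' hi'
        by_cases h2 : i' = i
        · subst h2; simp [aux_dn, hi]
        · simp [aux_dn, hi', h2]
  · simp

theorem aux_DF_inj {F : Type*} [Field F] {d : F → F} (hd : IsDerivation d) {n : ℕ}
    (q : (Fin (n+1) → ℕ) → F) (B : ℕ) (hB : ∀ m, B < m 0 → q m = 0)
    (h : ∀ m, aux_DF d q m = 0) : ∀ m, q m = 0 := by
  have : ∀ b, ∀ m, B < m 0 + b → q m = 0 := by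
    intro b
    induction b with
    | zero => intro m hm; exact hB m hm
    | succ b ih =>
      intro m hm
      rw [← aux_DF_up hd q m 0, h]
      intro m' hm' _
      apply ih; omega
  intro m
  exact this (B+1) m (by omega)

/-- the max is attained twice -/
def aux_gap0 {n : ℕ} (m : Fin n → ℕ) : Prop := ∀ j, ∃ j', j' ≠ j ∧ m j ≤ m j'

def aux_good (N : ℕ) {n : ℕ} (m : Fin n → ℕ) : Prop := aux_gap0 m ∧ ∀ j, m j < N

theorem aux_gapOne (k : ℕ) (hk : 1 ≤ k) (m : Fin (k+1) → ℕ) :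
    gapOne k m ↔ ∃ j, (∀ j', j' ≠ j → m j' < m j) ∧ ∃ j', j' ≠ j ∧ m j = m j' + 1 := by
  obtain ⟨k, rfl⟩ : ∃ k', k = k' + 1 := ⟨k - 1, by omega⟩
  have hle : ∀ t : Fin (k+1+1), t ≠ 0 → 1 ≤ t := by
    intro t ht
    rw [Fin.le_def]
    have : (t : ℕ) ≠ 0 := fun h => ht (Fin.ext h)
    simp; omega
  constructor
  · rintro ⟨σ, ha, h⟩
    refine ⟨σ 0, ?_, σ 1, ?_, h⟩
    · intro j' hj'
      obtain ⟨t, rfl⟩ := σ.surjective j'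
      have ht : t ≠ 0 := fun h => hj' (by rw [h])
      have := ha (hle t ht)
      simp only at this
      omega
    · intro h; have := σ.injective h; simp at this
  · rintro ⟨j, h1, j', h2, h3⟩
    set σ := Tuple.sort (fun i => OrderDual.toDual (m i)) with hσ
    have hmono : Antitone (fun i => m (σ i)) := by
      have := Tuple.monotone_sort (fun i => OrderDual.toDual (m i))
      intro a b hab
      exact this hab
    have h0 : σ 0 = j := by
      by_contra hne
      have := h1 _ hne
      have h := hmono (Fin.zero_le (σ.symm j))
      simp at h
      omega
    refine ⟨σ, hmono, ?_⟩
    have h10 : σ 1 ≠ j := by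
      rw [← h0]; intro h; have := σ.injective h; simp at this
    have h4 := h1 _ h10
    have h5 : m j' ≤ m (σ 1) := by
      have ht : σ.symm j' ≠ 0 := by
        intro h; apply h2; rw [← h0, ← h]; simp
      have := hmono (hle _ ht)
      simpa using this
    rw [h0]; omega

theorem aux_support_good {F : Type*} [Field F] {d : F → F} (hd : IsDerivation d) {n N : ℕ}
    (q : (Fin n → ℕ) → F) (B : ℕ) (hB : ∀ m j, B < m j → q m = 0)
    (h : ∀ m, aux_DF d q m ≠ 0 →
      (∃ j, (∀ j', j' ≠ j → m j' < m j) ∧ ∃ j', j' ≠ j ∧ m j = m j' + 1) ∧ ∀ j, m j ≤ N) :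
    ∀ m, ¬ aux_good N m → q m = 0 := by
  have step1 : ∀ b, ∀ m j, (∀ j', j' ≠ j → m j' < m j) → B < m j + b → q m = 0 := by
    intro b
    induction b with
    | zero => intro m j _ hm; exact hB m j hm
    | succ b ih =>
      intro m j hj hm
      rw [← aux_DF_up hd q m j]
      · by_contra hne
        obtain ⟨⟨i, hi, i', hi', hii⟩, _⟩ := h _ hne
        by_cases hij : i = j
        · subst hij
          have := hj i' hi'
          simp [hi'] at hii
          omega
        · have := hi j (Ne.symm hij)
          have := hj i hij
          simp [hij] at *
          omega
      · intro m' h1 h2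
        apply ih m' j
        · intro j' hj'
          have := h2 j' hj'
          have := hj j' hj'
          omega
        · omega
  have step2 : ∀ m j, (∀ j', j' ≠ j → m j' < m j) → q m = 0 := fun m j hj =>
    step1 (B+1) m j hj (by omega)
  intro m hm
  by_cases hg : aux_gap0 m
  · have : ∃ j, N ≤ m j := by
      by_contra hcon
      push Not at hcon
      exact hm ⟨hg, hcon⟩
    obtain ⟨j0, hj0⟩ := this
    obtain ⟨j, -, hj⟩ := Finset.exists_max_image Finset.univ m ⟨j0, Finset.mem_univ _⟩
    have hjN := hj j0 (Finset.mem_univ _)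
    rw [← aux_DF_up hd q m j]
    · by_contra hne
      have := (h _ hne).2 j
      simp at this
      omega
    · intro m' h1 h2
      apply step2 m' j
      intro j' hj'
      have := h2 j' hj'
      have := hj j' (Finset.mem_univ _)
      omega
  · simp only [aux_gap0, not_forall, not_exists, not_and, not_le] at hg
    obtain ⟨j, hj⟩ := hg
    exact step2 m j hj

/-- converse -/
theorem aux_good_support {F : Type*} [Field F] {d : F → F} (hd : IsDerivation d) {n N : ℕ}
    (q : (Fin n → ℕ) → F) (hq : ∀ m, ¬ aux_good N m → q m = 0)
    (heq : ∀ m, aux_good N m → aux_DF d q m = 0) (m : Fin n → ℕ) (hne : aux_DF d q m ≠ 0) :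
    (∃ j, (∀ j', j' ≠ j → m j' < m j) ∧ ∃ j', j' ≠ j ∧ m j = m j' + 1) ∧ ∀ j, m j ≤ N := by
  have hor : q m ≠ 0 ∨ ∃ j, m j ≠ 0 ∧ q (aux_dn j m) ≠ 0 := by
    by_contra hcon
    push Not at hcon
    apply hne
    rw [aux_DF, hcon.1, aux_d0 hd, zero_add]
    apply Finset.sum_eq_zero
    intro j _
    split_ifs with h0
    · rfl
    · exact hcon.2 j h0
  have hng : ¬ aux_good N m := fun h => hne (heq m h)
  rw [hq m hng] at hor
  simp only [ne_eq, not_true_eq_false, false_or] at hor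
  obtain ⟨j, hj0, hj⟩ := hor
  have hg : aux_good N (aux_dn j m) := by
    by_contra hcon; exact hj (hq _ hcon)
  obtain ⟨hg0, hgN⟩ := hg
  have e1 : aux_dn j m j = m j - 1 := by simp [aux_dn]
  have e2 : ∀ i, i ≠ j → aux_dn j m i = m i := by intro i hi; simp [aux_dn, hi]
  have hle : ∀ i, m i ≤ N := by
    intro i
    have := hgN i
    by_cases hi : i = j
    · subst hi; omega
    · rw [e2 i hi] at this; omega
  refine ⟨?_, hle⟩
  have hstrict : ∀ i, i ≠ j → m i < m j := by
    by_contra hcon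
    push Not at hcon
    obtain ⟨i, hij, hi⟩ := hcon
    apply hng
    constructor
    · intro a
      by_cases ha : a = j
      · subst ha; exact ⟨i, hij, hi⟩
      · obtain ⟨b, hb, hab⟩ := hg0 a
        refine ⟨b, hb, ?_⟩
        rw [e2 a ha] at hab
        by_cases hbj : b = j
        · subst hbj; omega
        · rwa [e2 b hbj] at hab
    · intro a
      have h1 := hgN a
      by_cases ha : a = j
      · subst ha
        have := hgN i
        rw [e2 i hij] at this; omega
      · rwa [e2 a ha] at h1
  refine ⟨j, hstrict, ?_⟩
  obtain ⟨b, hb, hab⟩ := hg0 j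
  refine ⟨b, hb, ?_⟩
  have := hstrict b hb
  rw [e1, e2 b hb] at hab
  omega

theorem aux_skew_uniq {J F : Type*} [LinearOrder J] [Field F] [CharZero F] {n : ℕ}
    (f : (Fin n → J) → F)
    (hf : ∀ (σ : Equiv.Perm (Fin n)) w, f (fun j => w (σ j)) = (Equiv.Perm.sign σ : ℤ) • f w)
    (h0 : ∀ w, StrictMono w → f w = 0) (w : Fin n → J) : f w = 0 := by
  by_cases hw : Function.Injective w
  · have h1 : StrictMono (w ∘ Tuple.sort w) :=
      (Tuple.monotone_sort w).strictMono_of_injective (hw.comp (Tuple.sort w).injective)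
    have h2 := hf (Tuple.sort w) w
    have h3 := h0 _ h1
    rw [show (w ∘ Tuple.sort w) = fun j => w (Tuple.sort w j) from rfl, h2] at h3
    rcases Int.units_eq_one_or (Equiv.Perm.sign (Tuple.sort w)) with h | h <;> simpa [h] using h3
  · simp only [Function.Injective, not_forall] at hw
    obtain ⟨a, b, hab, hne⟩ := hw
    have h := hf (Equiv.swap a b) w
    have : (fun j => w (Equiv.swap a b j)) = w := by
      funext j
      rcases eq_or_ne j a with rfl | hja
      · simp [hab]
      · rcases eq_or_ne j b with rfl | hjb
        · simp [hab]
        · rw [Equiv.swap_apply_of_ne_of_ne hja hjb]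
    rw [this, Equiv.Perm.sign_swap hne] at h
    simp at h
    exact self_eq_neg.1 h

theorem aux_skew_exists {J F : Type*} [LinearOrder J] [Field F] {n : ℕ}
    (c : (Fin n → J) → F) :
    ∃ f : (Fin n → J) → F,
    (∀ (σ : Equiv.Perm (Fin n)) w, f (fun j => w (σ j)) = (Equiv.Perm.sign σ : ℤ) • f w) ∧
    (∀ w, StrictMono w → f w = c w) ∧
    (∀ w, f w = 0 ∨ ∃ σ : Equiv.Perm (Fin n), StrictMono (fun j => w (σ j)) ∧
      f w = (Equiv.Perm.sign σ : ℤ) • c (fun j => w (σ j))) := by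
  classical
  have hsm : ∀ w : Fin n → J, Function.Injective w → StrictMono (w ∘ Tuple.sort w) := fun w hw =>
      (Tuple.monotone_sort w).strictMono_of_injective (hw.comp (Tuple.sort w).injective)
  refine ⟨fun w => if Function.Injective w then
    (Equiv.Perm.sign (Tuple.sort w) : ℤ) • c (w ∘ Tuple.sort w) else 0, ?_, ?_, ?_⟩
  · intro σ w
    have hiff : Function.Injective (fun j => w (σ j)) ↔ Function.Injective w :=
      (Equiv.injective_comp σ w)
    simp only [hiff]
    split_ifs with hw
    · have h1 : (fun j => w (σ j)) ∘ Tuple.sort (fun j => w (σ j)) = w ∘ Tuple.sort w :=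
        Tuple.comp_perm_comp_sort_eq_comp_sort
      have h2 : Tuple.sort w = σ * Tuple.sort (fun j => w (σ j)) := by
        ext j
        have := congrFun h1 j
        simp only [Function.comp] at this
        rw [Equiv.Perm.mul_apply]
        rw [hw this]
      rw [h1, smul_smul]
      congr 1
      rw [h2, Equiv.Perm.sign_mul]
      rcases Int.units_eq_one_or (Equiv.Perm.sign σ) with h | h <;> simp [h]
    · simp
  · intro w hw
    have : Tuple.sort w = Equiv.refl _ := Tuple.sort_eq_refl_iff_monotone.2 hw.monotone
    simp [hw.injective, this]
  · intro w
    by_cases hw : Function.Injective w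
    · right
      refine ⟨Tuple.sort w, hsm w hw, ?_⟩
      simp only [hw, if_true]
      rfl
    · left; simp [hw]

theorem aux_count {α : Type*} [DecidableEq α] (a : α → ℕ) (U : ℕ → Finset α)
    (hU : ∀ n x, x ∈ U n ↔ a x < n) (l : ℕ) (hc : ∀ n, (U n).card = n * l) (k N : ℕ) :
    (((((U N).powersetCard (k+1)).filter
      (fun S => ∀ x ∈ S, ∃ y ∈ S, y ≠ x ∧ a x ≤ a y)).card : ℕ) : ℤ)
     = ∑ n ∈ Finset.range N,
        ((((n + 1) * l).choose (k + 1) : ℤ) - ((n * l).choose (k + 1) : ℤ)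
          - (l : ℤ) * ((n * l).choose k : ℤ)) := by
  induction N with
  | zero =>
    have : U 0 = ∅ := by ext x; simp [hU]
    simp [this]
  | succ N ih =>
    rw [Finset.sum_range_succ, ← ih]
    set L := (U (N+1)).filter (fun x => a x = N) with hL
    have hLm : ∀ x, x ∈ L ↔ a x = N := by
      intro x; simp only [hL, Finset.mem_filter, hU]; omega
    have hLc : L.card = l := by
      have h1 := Finset.card_filter_add_card_filter_not (s := U (N+1)) (fun x => a x = N)
      have h2 : (U (N+1)).filter (fun x => ¬ a x = N) = U N := by
        ext x; simp only [Finset.mem_filter, hU]; omega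
      rw [h2, hc, hc, ← hL] at h1
      have : (N+1)*l = N*l + l := by ring
      omega
    set P := (U (N+1)).powersetCard (k+1) with hP
    have hPm : ∀ S, S ∈ P ↔ (∀ x ∈ S, a x < N + 1) ∧ S.card = k+1 := by
      intro S
      simp only [hP, Finset.mem_powersetCard, Finset.subset_iff, hU]
    have hP0 : ∀ S, S ∈ (U N).powersetCard (k+1) ↔ (∀ x ∈ S, a x < N) ∧ S.card = k+1 := by
      intro S
      simp only [Finset.mem_powersetCard, Finset.subset_iff, hU]
    set P0 := P.filter (fun S => (S.filter (fun x => a x = N)).card = 0) with hP0d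
    set P1 := P.filter (fun S => (S.filter (fun x => a x = N)).card = 1) with hP1d
    set P2 := P.filter (fun S => 2 ≤ (S.filter (fun x => a x = N)).card) with hP2d
    have hsplit : P.card = P0.card + P1.card + P2.card := by
      rw [hP0d, hP1d, hP2d, ← Finset.card_union_of_disjoint, ← Finset.card_union_of_disjoint]
      · congr 1
        ext S
        simp only [Finset.mem_union, Finset.mem_filter]
        have : (S.filter (fun x => a x = N)).card = 0 ∨ (S.filter (fun x => a x = N)).card = 1 ∨
          2 ≤ (S.filter (fun x => a x = N)).card := by omega
        tauto
      · rw [Finset.disjoint_left]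
        intro S
        simp only [Finset.mem_union, Finset.mem_filter]
        intro h1 h2
        omega
      · rw [Finset.disjoint_left]
        intro S
        simp only [Finset.mem_filter]
        intro h1 h2
        omega
    have hP0e : P0 = (U N).powersetCard (k+1) := by
      ext S
      rw [hP0, hP0d, Finset.mem_filter, hPm, Finset.card_eq_zero, Finset.filter_eq_empty_iff]
      constructor
      · rintro ⟨⟨h1, h2⟩, h3⟩
        exact ⟨fun x hx => by have := h1 x hx; have := h3 hx; omega, h2⟩
      · rintro ⟨h1, h2⟩
        exact ⟨⟨fun x hx => by have := h1 x hx; omega, h2⟩, fun x hx => by have := h1 x hx; omega⟩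
    have hP1c : P1.card = l * (N * l).choose k := by
      have h1 : (L ×ˢ (U N).powersetCard k).card = l * (N * l).choose k := by
        rw [Finset.card_product, hLc, Finset.card_powersetCard, hc]
      rw [← h1]
      symm
      have hTm : ∀ T, T ∈ (U N).powersetCard k ↔ (∀ x ∈ T, a x < N) ∧ T.card = k := by
        intro S
        simp only [Finset.mem_powersetCard, Finset.subset_iff, hU]
      have hflt : ∀ (x : α) (T : Finset α), a x = N → (∀ y ∈ T, a y < N) →
          (insert x T).filter (fun y => a y = N) = {x} := by
        intro x T hx hT
        ext y
        simp only [Finset.mem_filter, Finset.mem_insert, Finset.mem_singleton]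
        constructor
        · rintro ⟨h | h, h'⟩
          · exact h
          · have := hT y h; omega
        · rintro rfl
          exact ⟨Or.inl rfl, hx⟩
      have hers : ∀ (x : α) (T : Finset α), a x = N → (∀ y ∈ T, a y < N) → (insert x T).erase x = T := by
        intro x T hx hT
        apply Finset.erase_insert
        intro h
        have := hT x h; omega
      apply Finset.card_bij (fun p _ => insert p.1 p.2)
      · rintro ⟨x, T⟩ hp
        rw [Finset.mem_product, hLm, hTm] at hp
        obtain ⟨hx, hT, hTc⟩ := hp
        simp only at hx hT hTc
        rw [hP1d, Finset.mem_filter, hPm, hflt x T hx hT]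
        refine ⟨⟨?_, ?_⟩, by simp⟩
        · intro y hy
          rw [Finset.mem_insert] at hy
          rcases hy with rfl | hy
          · omega
          · have := hT y hy; omega
        · rw [Finset.card_insert_of_notMem, hTc]
          intro h
          have := hT x h; omega
      · rintro ⟨x, T⟩ hp ⟨y, T'⟩ hp' heq
        rw [Finset.mem_product, hLm, hTm] at hp hp'
        simp only at hp hp' heq
        have e1 := hflt x T hp.1 hp.2.1
        rw [heq, hflt y T' hp'.1 hp'.2.1, Finset.singleton_inj] at e1
        subst e1
        have e2 := hers y T hp.1 hp.2.1
        rw [heq, hers y T' hp'.1 hp'.2.1] at e2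
        rw [e2]
      · intro S hS
        rw [hP1d, Finset.mem_filter, hPm] at hS
        obtain ⟨⟨h1, h2⟩, h3⟩ := hS
        obtain ⟨x, hx⟩ := Finset.card_eq_one.1 h3
        have hxS : x ∈ S ∧ a x = N := by
          have : x ∈ S.filter (fun x => a x = N) := by rw [hx]; simp
          simpa using this
        refine ⟨(x, S.erase x), ?_, Finset.insert_erase hxS.1⟩
        rw [Finset.mem_product, hLm, hTm]
        refine ⟨hxS.2, ?_, ?_⟩
        · intro y hy
          rw [Finset.mem_erase] at hy
          have := h1 y hy.2
          have hne : a y ≠ N := by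
            intro h
            apply hy.1
            have : y ∈ S.filter (fun x => a x = N) := Finset.mem_filter.2 ⟨hy.2, h⟩
            rw [hx] at this
            simpa using this
          omega
        · rw [Finset.card_erase_of_mem hxS.1, h2]; rfl
    have hPc : P.card = ((N+1)*l).choose (k+1) := by rw [hP, Finset.card_powersetCard, hc]
    have hP0c : P0.card = (N*l).choose (k+1) := by rw [hP0e, Finset.card_powersetCard, hc]
    have hfin : (P.filter (fun S => ∀ x ∈ S, ∃ y ∈ S, y ≠ x ∧ a x ≤ a y)).card
        = (((U N).powersetCard (k+1)).filter
          (fun S => ∀ x ∈ S, ∃ y ∈ S, y ≠ x ∧ a x ≤ a y)).card + P2.card := by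
      rw [← Finset.card_union_of_disjoint]
      · congr 1
        ext S
        rw [Finset.mem_union, Finset.mem_filter, Finset.mem_filter, ← hP0e, hP0d, hP2d,
          Finset.mem_filter, Finset.mem_filter]
        constructor
        · rintro ⟨h1, h2⟩
          by_cases h0 : (S.filter (fun x => a x = N)).card = 0
          · exact Or.inl ⟨⟨h1, h0⟩, h2⟩
          · right
            refine ⟨h1, ?_⟩
            obtain ⟨x, hx⟩ := Finset.card_pos.1 (Nat.pos_of_ne_zero h0)
            rw [Finset.mem_filter] at hx
            obtain ⟨y, hy, hyx, hxy⟩ := h2 x hx.1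
            have hy' := ((hPm S).1 h1).1 y hy
            apply Finset.one_lt_card.2
            exact ⟨x, Finset.mem_filter.2 hx, y, Finset.mem_filter.2 ⟨hy, by omega⟩, hyx.symm⟩
        · rintro (⟨⟨h1, h0⟩, h2⟩ | ⟨h1, h2⟩)
          · exact ⟨h1, h2⟩
          · refine ⟨h1, ?_⟩
            intro x hx
            obtain ⟨y, hy, hne⟩ := Finset.exists_mem_ne h2 x
            rw [Finset.mem_filter] at hy
            have := ((hPm S).1 h1).1 x hx
            exact ⟨y, hy.1, hne, by omega⟩
      · rw [Finset.disjoint_left]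
        intro S h1 h2
        rw [Finset.mem_filter, ← hP0e, hP0d, Finset.mem_filter] at h1
        rw [hP2d, Finset.mem_filter] at h2
        omega
    rw [hfin]
    push_cast
    rw [← hPc, ← hP0c, hsplit, hP1c]
    push_cast
    ring

theorem aux_card_B (k l N : ℕ) (D : ℕ)
    (hD : (D : ℤ) = ∑ n ∈ Finset.range N,
        ((((n + 1) * l).choose (k + 1) : ℤ) - ((n * l).choose (k + 1) : ℤ)
          - (l : ℤ) * ((n * l).choose k : ℤ))) :
    Finite {w : Fin (k+1) → ℕ ×ₗ Fin l // StrictMono w ∧ aux_good N (fun j => (ofLex (w j)).1)} ∧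
    Nat.card {w : Fin (k+1) → ℕ ×ₗ Fin l // StrictMono w ∧ aux_good N (fun j => (ofLex (w j)).1)}
      = D := by
  classical
  set U : ℕ → Finset (ℕ ×ₗ Fin l) := fun n =>
    (Finset.range n ×ˢ (Finset.univ : Finset (Fin l))).map toLex.toEmbedding with hUd
  have hU : ∀ n x, x ∈ U n ↔ (ofLex x).1 < n := by
    intro n x
    simp only [hUd, Finset.mem_map, Finset.mem_product, Finset.mem_range, Finset.mem_univ, and_true]
    constructor
    · rintro ⟨y, hy, rfl⟩; exact hy
    · intro h; exact ⟨ofLex x, h, rfl⟩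
  have hc : ∀ n, (U n).card = n * l := by
    intro n; simp [hUd]
  have hcount := aux_count (fun x : ℕ ×ₗ Fin l => (ofLex x).1) U hU l hc k N
  rw [← hD] at hcount
  have hcount' := Int.ofNat.inj hcount
  set T := ((U N).powersetCard (k+1)).filter
      (fun S => ∀ x ∈ S, ∃ y ∈ S, y ≠ x ∧ (ofLex x).1 ≤ (ofLex y).1) with hT
  have e : {w : Fin (k+1) → ℕ ×ₗ Fin l //
      StrictMono w ∧ aux_good N (fun j => (ofLex (w j)).1)} ≃ {S // S ∈ T} := by
    refine Equiv.ofBijective (fun w => ⟨Finset.univ.image w.1, ?_⟩) ⟨?_, ?_⟩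
    · obtain ⟨w, hw, hg, hN⟩ := w
      rw [hT, Finset.mem_filter, Finset.mem_powersetCard]
      refine ⟨⟨?_, ?_⟩, ?_⟩
      · intro x hx
        obtain ⟨j, -, rfl⟩ := Finset.mem_image.1 hx
        exact (hU _ _).2 (hN j)
      · rw [Finset.card_image_of_injective _ hw.injective]; simp
      · intro x hx
        obtain ⟨j, -, rfl⟩ := Finset.mem_image.1 hx
        obtain ⟨j', hne, hle⟩ := hg j
        exact ⟨w j', Finset.mem_image_of_mem _ (Finset.mem_univ _), hw.injective.ne hne, hle⟩
    · rintro ⟨w, hw, hg⟩ ⟨w', hw', hg'⟩ h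
      simp only [Subtype.mk.injEq] at h
      apply Subtype.ext
      refine (StrictMono.range_inj hw hw').1 ?_
      have := congrArg (fun S : Finset (ℕ ×ₗ Fin l) => (S : Set (ℕ ×ₗ Fin l))) h
      simpa using this
    · rintro ⟨S, hS⟩
      have hS' := hS
      rw [hT, Finset.mem_filter, Finset.mem_powersetCard] at hS'
      obtain ⟨⟨h1, h2⟩, h3⟩ := hS'
      have him : Finset.univ.image (S.orderEmbOfFin h2) = S := by
        apply Finset.coe_injective; simp
      have hmem : ∀ j, S.orderEmbOfFin h2 j ∈ S := fun j => S.orderEmbOfFin_mem h2 j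
      refine ⟨⟨S.orderEmbOfFin h2, (S.orderEmbOfFin h2).strictMono, ?_, ?_⟩, ?_⟩
      · intro j
        obtain ⟨y, hy, hne, hle⟩ := h3 _ (hmem j)
        rw [← him] at hy
        obtain ⟨j', -, rfl⟩ := Finset.mem_image.1 hy
        exact ⟨j', fun h => hne (by rw [h]), hle⟩
      · intro j
        exact (hU _ _).1 (h1 (hmem j))
      · apply Subtype.ext
        exact him
  constructor
  · exact Finite.of_equiv _ e.symm
  · rw [Nat.card_congr e, Nat.card_eq_fintype_card, Fintype.card_coe]
    exact hcount'

theorem aux_cf_inj {F : Type*} [Field F] {n : ℕ} {P Q : MvPolynomial (Fin n) F}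
    (h : ∀ m, aux_cf P m = aux_cf Q m) : P = Q := by
  ext m
  have := h m
  simpa [aux_cf] using this

theorem aux_cf_bound {F : Type*} [Field F] {n : ℕ} (P : MvPolynomial (Fin n) F) (m : Fin n → ℕ)
    (j : Fin n) (h : P.totalDegree < m j) : aux_cf P m = 0 := by
  by_contra hne
  have h1 := MvPolynomial.le_totalDegree (MvPolynomial.mem_support_iff.2 hne)
  have h2 : m j ≤ (Finsupp.equivFunOnFinite.symm m).sum fun _ e => e := by
    rw [Finsupp.sum_fintype _ _ (by simp)]
    exact Finset.single_le_sum (f := fun i => Finsupp.equivFunOnFinite.symm m i)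
      (fun _ _ => Nat.zero_le _) (Finset.mem_univ j)
  omega

/-- polynomial with given coefficients -/
noncomputable def aux_mk {F : Type*} [Field F] {n M : ℕ} (t : (Fin n → Fin M) → F) :
    MvPolynomial (Fin n) F :=
  ∑ m, MvPolynomial.monomial (Finsupp.equivFunOnFinite.symm fun j => (m j : ℕ)) (t m)

theorem aux_cf_mk {F : Type*} [Field F] {n M : ℕ} (t : (Fin n → Fin M) → F) (m : Fin n → Fin M) :
    aux_cf (aux_mk t) (fun j => (m j : ℕ)) = t m := by
  classical
  rw [aux_cf, aux_mk, MvPolynomial.coeff_sum, Finset.sum_eq_single m]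
  · simp
  · intro m' _ hne
    rw [MvPolynomial.coeff_monomial, if_neg]
    intro h
    apply hne
    have := Finsupp.equivFunOnFinite.symm.injective h
    funext j
    exact Fin.ext (congrFun this j)
  · simp

theorem aux_cf_mk_zero {F : Type*} [Field F] {n M : ℕ} (t : (Fin n → Fin M) → F) (m : Fin n → ℕ)
    (j : Fin n) (hj : M ≤ m j) : aux_cf (aux_mk t) m = 0 := by
  classical
  rw [aux_cf, aux_mk, MvPolynomial.coeff_sum]
  apply Finset.sum_eq_zero
  intro m' _
  rw [MvPolynomial.coeff_monomial, if_neg]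
  intro h
  have := congrFun (Finsupp.equivFunOnFinite.symm.injective h) j
  have := (m' j).2
  omega

theorem aux_bdd {n M : ℕ} (m : Fin n → ℕ) : (∃ m' : Fin n → Fin M, m = fun j => (m' j : ℕ)) ∨
    ∃ j, M ≤ m j := by
  by_cases h : ∃ j, M ≤ m j
  · exact Or.inr h
  · push Not at h
    exact Or.inl ⟨fun j => ⟨m j, h j⟩, rfl⟩

theorem aux_Phi_mk {F : Type*} [Field F] {d : F → F} (hd : IsDerivation d) {k M : ℕ}
    (t : (Fin (k+1) → Fin M) → F) :
    aux_Phi hd k (aux_mk t) = ∑ m : Fin (k + 1) → Fin M,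
            (lamZero d)^[(m 0 : ℕ)]
              ((MvPolynomial.monomial
                  (Finsupp.equivFunOnFinite.symm fun a : Fin k => (m a.succ : ℕ)))
                (t m)) := by
  rw [aux_mk, map_sum]
  apply Finset.sum_congr rfl
  intro m _
  rw [aux_Phi_monomial, aux_L_pow hd]
  rfl

theorem aux_DF_perm {F : Type*} [Field F] (d : F → F) {n : ℕ}
    (q : (Fin n → ℕ) → F) (σ : Equiv.Perm (Fin n)) (m : Fin n → ℕ) :
    aux_DF d (fun m => q (fun j => m (σ j))) m = aux_DF d q (fun j => m (σ j)) := by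
  rw [aux_DF, aux_DF]
  congr 1
  rw [← Equiv.sum_comp σ]
  apply Finset.sum_congr rfl
  intro j _
  congr 2
  funext a
  by_cases h : a = j
  · subst h; simp [aux_dn]
  · simp [aux_dn, h]

theorem aux_d_zsmul {F : Type*} [Field F] {d : F → F} (hd : IsDerivation d) (z : ℤ) (a : F) :
    d (z • a) = z • d a :=
  map_zsmul (AddMonoidHom.mk' d hd.map_add) z a

theorem aux_DF_zsmul {F : Type*} [Field F] {d : F → F} (hd : IsDerivation d) {n : ℕ}
    (q : (Fin n → ℕ) → F) (z : ℤ) (m : Fin n → ℕ) :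
    aux_DF d (fun m => z • q m) m = z • aux_DF d q m := by
  rw [aux_DF, aux_DF, aux_d_zsmul hd, smul_add, Finset.smul_sum]
  congr 1
  apply Finset.sum_congr rfl
  intro j _
  split_ifs <;> simp

theorem aux_DF_sub {F : Type*} [Field F] {d : F → F} (hd : IsDerivation d) {n : ℕ}
    (q r : (Fin n → ℕ) → F) (m : Fin n → ℕ) :
    aux_DF d (fun m => q m - r m) m = aux_DF d q m - aux_DF d r m := by
  have h : d (q m - r m) = d (q m) - d (r m) := map_sub (AddMonoidHom.mk' d hd.map_add) _ _
  rw [aux_DF, aux_DF, aux_DF, h, add_sub_add_comm, ← Finset.sum_sub_distrib]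
  congr 1
  apply Finset.sum_congr rfl
  intro j _
  split_ifs <;> simp

/-- skewsymmetry -/
def aux_skew {I J F : Type*} [Field F] {n : ℕ} (q : (Fin n → I) → (Fin n → J) → F) : Prop :=
  ∀ (σ : Equiv.Perm (Fin n)) (m : Fin n → I) (i : Fin n → J),
    q (fun j => m (σ j)) (fun j => i (σ j)) = (Equiv.Perm.sign σ : ℤ) • q m i

theorem aux_good_perm {N n : ℕ} (m : Fin n → ℕ) (σ : Equiv.Perm (Fin n)) (h : aux_good N m) :
    aux_good N (fun j => m (σ j)) := by
  refine ⟨?_, fun j => h.2 _⟩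
  intro j
  obtain ⟨j', h1, h2⟩ := h.1 (σ j)
  refine ⟨σ.symm j', ?_, by simpa using h2⟩
  rintro rfl
  simp at h1

theorem aux_S1 {F : Type*} [Field F] {d : F → F} (hd : IsDerivation d) {k l N : ℕ} (hk : 1 ≤ k)
    (q : (Fin (k+1) → ℕ) → (Fin (k+1) → Fin l) → F) (hs : aux_skew q)
    (hg : ∀ m i, ¬ aux_good N m → q m i = 0)
    (heq : ∀ m i, aux_good N m → aux_DF d (fun m => q m i) m = 0)
    (s : (Fin (k + 1) → Fin (N + 1)) → (Fin (k + 1) → Fin l) → F)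
    (hsq : ∀ m i, s m i = aux_DF d (fun m => q m i) (fun j => (m j : ℕ))) :
      ((∀ m i, ¬ gapOne k (fun j => (m j : ℕ)) → s m i = 0) ∧
       (∀ (σ : Equiv.Perm (Fin (k + 1))) (m : Fin (k + 1) → Fin (N + 1))
          (i : Fin (k + 1) → Fin l),
          s (fun j => m (σ j)) (fun j => i (σ j)) = (Equiv.Perm.sign σ : ℤ) • s m i) ∧
       (∀ i : Fin (k + 1) → Fin l,
          ∑ m : Fin (k + 1) → Fin (N + 1),
            (lamZero d)^[(m 0 : ℕ)]
              ((MvPolynomial.monomial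
                  (Finsupp.equivFunOnFinite.symm fun a : Fin k => (m a.succ : ℕ)))
                (s m i)) = 0)) := by
  have hgs := fun i => aux_good_support hd (fun m => q m i) (fun m => hg m i) (fun m => heq m i)
  refine ⟨?_, ?_, ?_⟩
  · intro m i hm
    by_contra hne
    rw [hsq] at hne
    exact hm ((aux_gapOne k hk _).2 (hgs i _ hne).1)
  · intro σ m i
    rw [hsq, hsq, ← aux_DF_zsmul hd]
    have := aux_DF_perm d (fun m => q m (fun j => i (σ j))) σ (fun j => (m j : ℕ))
    rw [← this]
    congr 1
    funext m
    exact hs σ m i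
  · intro i
    rw [← aux_Phi_mk hd (fun m => s m i)]
    have hcf : ∀ m, aux_cf (aux_mk (fun m : Fin (k+1) → Fin N => q (fun j => (m j : ℕ)) i)) m
        = q m i := by
      intro m
      rcases aux_bdd (M := N) m with ⟨m', rfl⟩ | ⟨j, hj⟩
      · rw [aux_cf_mk]
      · rw [aux_cf_mk_zero _ _ j hj, hg]
        intro h
        have := h.2 j
        omega
    have : aux_mk (fun m => s m i) = aux_BD hd (k+1)
        (aux_mk (fun m : Fin (k+1) → Fin N => q (fun j => (m j : ℕ)) i)) := by
      apply aux_cf_inj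
      intro m
      rw [aux_cf_BD, funext hcf]
      rcases aux_bdd (M := N+1) m with ⟨m', rfl⟩ | ⟨j, hj⟩
      · rw [aux_cf_mk, hsq]
      · rw [aux_cf_mk_zero _ _ j hj]
        by_contra hne
        have := (hgs i m (Ne.symm hne)).2 j
        omega
    rw [this, aux_Phi_BD]

theorem aux_S2 {F : Type*} [Field F] {d : F → F} (hd : IsDerivation d) {k l N : ℕ} (hk : 1 ≤ k)
    (s : (Fin (k + 1) → Fin (N + 1)) → (Fin (k + 1) → Fin l) → F)
    (h1 : ∀ m i, ¬ gapOne k (fun j => (m j : ℕ)) → s m i = 0)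
    (h2 : ∀ (σ : Equiv.Perm (Fin (k + 1))) (m : Fin (k + 1) → Fin (N + 1))
          (i : Fin (k + 1) → Fin l),
          s (fun j => m (σ j)) (fun j => i (σ j)) = (Equiv.Perm.sign σ : ℤ) • s m i)
    (h3 : ∀ i : Fin (k + 1) → Fin l,
          ∑ m : Fin (k + 1) → Fin (N + 1),
            (lamZero d)^[(m 0 : ℕ)]
              ((MvPolynomial.monomial
                  (Finsupp.equivFunOnFinite.symm fun a : Fin k => (m a.succ : ℕ)))
                (s m i)) = 0) :
    ∃ q : (Fin (k+1) → ℕ) → (Fin (k+1) → Fin l) → F, aux_skew q ∧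
    (∀ m i, ¬ aux_good N m → q m i = 0) ∧
    (∀ m i, aux_good N m → aux_DF d (fun m => q m i) m = 0) ∧
    (∀ m i, s m i = aux_DF d (fun m => q m i) (fun j => (m j : ℕ))) := by
  have hQ : ∀ i, ∃ Q, aux_mk (fun m => s m i) = aux_BD hd (k+1) Q := by
    intro i
    obtain ⟨Q, hQ⟩ := aux_div hd k (aux_mk (fun m => s m i))
    rw [aux_Phi_mk, h3, map_zero, zero_add] at hQ
    exact ⟨Q, hQ⟩
  choose Q hQ using hQ
  have hDF : ∀ i m, aux_DF d (aux_cf (Q i)) m = aux_cf (aux_mk (fun m => s m i)) m := by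
    intro i m
    rw [hQ, aux_cf_BD]
  have hgap : ∀ i m, aux_DF d (aux_cf (Q i)) m ≠ 0 →
      (∃ j, (∀ j', j' ≠ j → m j' < m j) ∧ ∃ j', j' ≠ j ∧ m j = m j' + 1) ∧ ∀ j, m j ≤ N := by
    intro i m hne
    rw [hDF] at hne
    rcases aux_bdd (M := N+1) m with ⟨m', rfl⟩ | ⟨j, hj⟩
    · rw [aux_cf_mk] at hne
      refine ⟨?_, fun j => Nat.lt_succ_iff.1 (m' j).2⟩
      rw [← aux_gapOne k hk]
      by_contra hcon
      exact hne (h1 _ _ hcon)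
    · exact absurd (aux_cf_mk_zero _ _ j hj) hne
  have hgood : ∀ i m, ¬ aux_good N m → aux_cf (Q i) m = 0 := fun i =>
    aux_support_good hd (aux_cf (Q i)) (Q i).totalDegree
      (fun m j h => aux_cf_bound _ m j h) (hgap i)
  refine ⟨fun m i => aux_cf (Q i) m, ?_, fun m i => hgood i m, ?_, ?_⟩
  · intro σ m i
    have key := aux_DF_inj hd (fun m => (fun m => aux_cf (Q (fun j => i (σ j))) (fun j => m (σ j))) m
      - (fun m => (Equiv.Perm.sign σ : ℤ) • aux_cf (Q i) m) m) N ?_ ?_ m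
    · exact sub_eq_zero.1 key
    · intro m hm
      have e1 : ¬ aux_good N m := fun h => by have := h.2 0; omega
      have e2 : ¬ aux_good N (fun j => m (σ j)) := fun h => by
        have := h.2 (σ.symm 0); simp at this; omega
      simp only [hgood _ _ e1, hgood _ _ e2, smul_zero, sub_zero]
    · intro m
      rw [aux_DF_sub hd, aux_DF_zsmul hd, aux_DF_perm d (aux_cf (Q (fun j => i (σ j)))) σ m,
        hDF, hDF, sub_eq_zero]
      rcases aux_bdd (M := N+1) m with ⟨m', rfl⟩ | ⟨j, hj⟩
      · rw [aux_cf_mk _ (fun j => m' (σ j)), aux_cf_mk]; exact h2 σ m' i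
      · rw [aux_cf_mk_zero _ _ j hj, aux_cf_mk_zero _ _ (σ.symm j) (by simpa using hj), smul_zero]
  · intro m i hm
    by_contra hne
    obtain ⟨⟨j, hj, -⟩, -⟩ := hgap i m hne
    obtain ⟨j', h, h'⟩ := hm.1 j
    have := hj j' h
    omega
  · intro m i
    have := hDF i (fun j => (m j : ℕ))
    rw [aux_cf_mk] at this
    exact this.symm

theorem aux_S3 {F : Type*} [Field F] {d : F → F} (hd : IsDerivation d) {k N : ℕ}
    (q : (Fin (k+1) → ℕ) → F)
    (hg : ∀ m, ¬ aux_good N m → q m = 0)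
    (heq : ∀ m, aux_good N m → aux_DF d q m = 0)
    (h0 : ∀ m : Fin (k+1) → Fin (N+1), aux_DF d q (fun j => (m j : ℕ)) = 0) :
    ∀ m, q m = 0 := by
  refine aux_DF_inj hd q N ?_ ?_
  · intro m hm
    apply hg
    intro h
    have := h.2 0
    omega
  · intro m
    rcases aux_bdd (M := N+1) m with ⟨m', rfl⟩ | ⟨j, hj⟩
    · exact h0 m'
    · by_contra hne
      have := (aux_good_support hd q hg heq m hne).2 j
      omega

/-- Let `F` be a linearly closed differential field of characteristic zero with constants
`C`.  The families `s^{m_0,…,m_k}_{i_0,…,i_k} ∈ F` indexed by `i_0,…,i_k ∈ {1,…,ℓ}` and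
tuples `(m_0,…,m_k) ∈ {0,…,N}^{k+1}` whose non-increasing rearrangement satisfies
`μ_0 − μ_1 = 1`, skewsymmetric under simultaneous permutations of upper and lower
indices, satisfying `Σ_m Λ₀^{m_0} (λ_1^{m_1}⋯λ_k^{m_k} · s^m_i) = 0` for all `i`, form a
`C`-vector space of dimension
`D = Σ_{n=0}^{N−1} (binom((n+1)ℓ, k+1) − binom(nℓ, k+1) − ℓ·binom(nℓ, k))`. -/
theorem aux_inj {R M M' : Type*} [Semiring R] [AddCommMonoid M] [AddCommMonoid M'] [Module R M]
    [Module R M'] (f : M →ₗ[R] M') (hn : ∀ q : M, ∃ r, r + q = 0)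
    (h : ∀ q, f q = 0 → q = 0) : Function.Injective f := by
  intro p q e
  obtain ⟨r, hr⟩ := hn q
  have h1 : r + p = 0 := h _ (by rw [f.map_add, e, ← f.map_add, hr, f.map_zero])
  calc p = p + (r + q) := by rw [hr, add_zero]
    _ = (r + p) + q := by rw [← add_assoc, add_comm p r]
    _ = q := by rw [h1, zero_add]

theorem stmt_13 (F : Type*) [Field F] [CharZero F] (d : F → F) (hd : IsDerivation d)
    (hlc : LinearlyClosed d)
    (C : Subfield F) (hC : ∀ x : F, x ∈ C ↔ d x = 0)
    (k l N : ℕ) (hk : 1 ≤ k) (hl : 0 < l) (hN : 1 ≤ N)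
    (Sol : Submodule C ((Fin (k + 1) → Fin (N + 1)) → (Fin (k + 1) → Fin l) → F))
    (hSol : ∀ s : (Fin (k + 1) → Fin (N + 1)) → (Fin (k + 1) → Fin l) → F, s ∈ Sol ↔
      ((∀ m i, ¬ gapOne k (fun j => (m j : ℕ)) → s m i = 0) ∧
       (∀ (σ : Equiv.Perm (Fin (k + 1))) (m : Fin (k + 1) → Fin (N + 1))
          (i : Fin (k + 1) → Fin l),
          s (fun j => m (σ j)) (fun j => i (σ j)) = (Equiv.Perm.sign σ : ℤ) • s m i) ∧
       (∀ i : Fin (k + 1) → Fin l,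
          ∑ m : Fin (k + 1) → Fin (N + 1),
            (lamZero d)^[(m 0 : ℕ)]
              ((MvPolynomial.monomial
                  (Finsupp.equivFunOnFinite.symm fun a : Fin k => (m a.succ : ℕ)))
                (s m i)) = 0)))
    (D : ℕ)
    (hD : (D : ℤ) = ∑ n ∈ Finset.range N,
        ((((n + 1) * l).choose (k + 1) : ℤ) - ((n * l).choose (k + 1) : ℤ)
          - (l : ℤ) * ((n * l).choose k : ℤ))) :
    Module.rank C Sol = (D : Cardinal) := by
  classical
  obtain ⟨x, hx⟩ : ∃ x, d x = 1 := by
    obtain ⟨x, hx⟩ := (hlc 1 (fun n => if n = 1 then 1 else 0) (by simp)).1 1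
    refine ⟨x, ?_⟩
    simpa [Finset.sum_range_succ] using hx
  have hdC : ∀ (c : C) (a : F), d (c • a) = c • d a := by
    intro c a
    have h0 : d (c : F) = 0 := (hC c).1 c.2
    change d ((c : F) * a) = (c : F) * d a
    rw [hd.leibniz, h0, zero_mul, zero_add]
  have hd0 := aux_d0 hd
  have hdsum : ∀ {ι : Type} (t : Finset ι) (f : ι → F), d (∑ j ∈ t, f j) = ∑ j ∈ t, d (f j) :=
    fun t f => map_sum (AddMonoidHom.mk' d hd.map_add) f t
  let V : Submodule C ((Fin (k+1) → ℕ) → (Fin (k+1) → Fin l) → F) :=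
    { carrier := {q | aux_skew q ∧ ∀ m i, ¬ aux_good N m → q m i = 0}
      add_mem' := by
        rintro p q ⟨h1, h2⟩ ⟨h3, h4⟩
        refine ⟨fun σ m i => ?_, fun m i h => ?_⟩
        · simp only [Pi.add_apply, h1 σ m i, h3 σ m i, smul_add]
        · simp only [Pi.add_apply, h2 m i h, h4 m i h, add_zero]
      zero_mem' := ⟨fun σ m i => by simp, fun m i h => rfl⟩
      smul_mem' := by
        rintro c q ⟨h1, h2⟩
        refine ⟨fun σ m i => ?_, fun m i h => ?_⟩
        · simp only [Pi.smul_apply, h1 σ m i]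
          rw [smul_comm]
        · simp only [Pi.smul_apply, h2 m i h, smul_zero] }
  let DV : Module.End C V :=
    { toFun := fun q => ⟨fun m i => d (q.1 m i), fun σ m i => by
          beta_reduce; rw [q.2.1 σ m i, aux_d_zsmul hd], fun m i h => by
          beta_reduce; rw [q.2.2 m i h, hd0]⟩
      map_add' := by
        intro p q
        apply Subtype.ext; funext m i
        exact hd.map_add _ _
      map_smul' := by
        intro c q
        apply Subtype.ext; funext m i
        exact hdC _ _ }
  let XV : Module.End C V :=
    { toFun := fun q => ⟨fun m i => x * q.1 m i, fun σ m i => by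
          beta_reduce; rw [q.2.1 σ m i, mul_smul_comm], fun m i h => by
          beta_reduce; rw [q.2.2 m i h, mul_zero]⟩
      map_add' := by
        intro p q
        apply Subtype.ext; funext m i
        exact mul_add _ _ _
      map_smul' := by
        intro c q
        apply Subtype.ext; funext m i
        change x * (c • q.1 m i) = c • (x * q.1 m i)
        rw [mul_smul_comm] }
  let aa : ((Fin (k+1) → ℕ) → (Fin (k+1) → Fin l) → F) →
      (Fin (k+1) → ℕ) → (Fin (k+1) → Fin l) → F := fun q m i =>
    if aux_good N m then ∑ j, (if m j = 0 then 0 else q (aux_dn j m) i) else 0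
  have haa : ∀ q m i, aa q m i =
    if aux_good N m then ∑ j, (if m j = 0 then 0 else q (aux_dn j m) i) else 0 := fun _ _ _ => rfl
  have hgp : ∀ (σ : Equiv.Perm (Fin (k+1))) (m : Fin (k+1) → ℕ),
      aux_good N (fun j => m (σ j)) ↔ aux_good N m := by
    intro σ m
    constructor
    · intro h
      have := aux_good_perm _ σ⁻¹ h
      simpa using this
    · exact aux_good_perm m σ
  have haskew : ∀ q, aux_skew q → aux_skew (aa q) := by
    intro q hq σ m i
    rw [haa, haa, hgp]
    split_ifs with hg
    · have e := aux_DF_perm (fun _ => (0:F)) (fun m => q m (fun j => i (σ j))) σ m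
      rw [aux_DF, aux_DF, zero_add, zero_add] at e
      rw [← e, Finset.smul_sum]
      apply Finset.sum_congr rfl
      intro j _
      split_ifs
      · simp
      · exact hq σ _ i
    · simp
  let AV : Module.End C V :=
    { toFun := fun q => ⟨aa q.1, haskew _ q.2.1, fun m i h => by rw [haa, if_neg h]⟩
      map_add' := by
        intro p q
        apply Subtype.ext; funext m i
        change aa (p.1 + q.1) m i = aa p.1 m i + aa q.1 m i
        rw [haa, haa, haa]
        split_ifs with hg
        · rw [← Finset.sum_add_distrib]
          apply Finset.sum_congr rfl
          intro j _
          split_ifs <;> simp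
        · simp
      map_smul' := by
        intro c q
        apply Subtype.ext; funext m i
        change aa (c • q.1) m i = c • aa q.1 m i
        rw [haa, haa]
        split_ifs with hg
        · rw [Finset.smul_sum]
          apply Finset.sum_congr rfl
          intro j _
          split_ifs <;> simp
        · simp }
  have hDVa : ∀ (q : V) m i, (DV q).1 m i = d (q.1 m i) := fun _ _ _ => rfl
  have hXVa : ∀ (q : V) m i, (XV q).1 m i = x * (q.1 m i) := fun _ _ _ => rfl
  have hAVa : ∀ (q : V) m i, (AV q).1 m i = aa q.1 m i := fun _ _ _ => rfl
  have c1 : DV * XV = XV * DV + 1 := by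
    apply LinearMap.ext; intro q
    apply Subtype.ext; funext m i
    change d (x * q.1 m i) = x * d (q.1 m i) + q.1 m i
    rw [hd.leibniz, hx]; ring
  have c2 : Commute AV DV := by
    apply LinearMap.ext; intro q
    apply Subtype.ext; funext m i
    change aa (DV q).1 m i = d (aa q.1 m i)
    rw [haa, haa]
    split_ifs with hg
    · rw [hdsum]
      apply Finset.sum_congr rfl
      intro j _
      split_ifs
      · exact hd0.symm
      · rfl
    · exact hd0.symm
  have c3 : Commute AV XV := by
    apply LinearMap.ext; intro q
    apply Subtype.ext; funext m i
    change aa (XV q).1 m i = x * (aa q.1 m i)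
    rw [haa, haa]
    split_ifs with hg
    · rw [Finset.mul_sum]
      apply Finset.sum_congr rfl
      intro j _
      split_ifs
      · simp
      · rfl
    · simp
  have hnil : IsNilpotent AV := by
    have hstep : ∀ n (q : V) m i, ∑ j, m j < n → ((AV ^ n) q).1 m i = 0 := by
      intro n
      induction n with
      | zero => intro q m i h; omega
      | succ n ih =>
        intro q m i h
        rw [pow_succ', Module.End.mul_apply, hAVa, haa]
        split_ifs with hg
        · apply Finset.sum_eq_zero
          intro j _
          split_ifs with h0
          · rfl
          · apply ih
            have : ∑ a, aux_dn j m a < ∑ a, m a := by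
              apply Finset.sum_lt_sum
              · intro a _
                by_cases ha : a = j
                · subst ha; simp [aux_dn]
                · simp [aux_dn, ha]
              · exact ⟨j, Finset.mem_univ _, by simp [aux_dn]; omega⟩
            omega
        · rfl
    refine ⟨(k+1) * N + 1, ?_⟩
    apply LinearMap.ext; intro q
    apply Subtype.ext; funext m i
    change ((AV ^ ((k+1)*N+1)) q).1 m i = 0
    by_cases hg : aux_good N m
    · apply hstep
      have : ∑ j, m j ≤ ∑ j : Fin (k+1), N := Finset.sum_le_sum fun j _ => (hg.2 j).le
      simp at this
      omega
    · exact ((AV ^ ((k+1)*N+1)) q).2.2 m i hg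
  have hrank := aux_exp_rank DV XV AV c1 c2 c3 hnil
  -- constants
  obtain ⟨hfin, hcard⟩ := aux_card_B k l N D hD
  have hker : Module.rank C (LinearMap.ker DV) = (D : Cardinal) := by
    have := Fintype.ofFinite {w : Fin (k+1) → ℕ ×ₗ Fin l //
      StrictMono w ∧ aux_good N (fun j => (ofLex (w j)).1)}
    let R : LinearMap.ker DV →ₗ[C] ({w : Fin (k+1) → ℕ ×ₗ Fin l //
      StrictMono w ∧ aux_good N (fun j => (ofLex (w j)).1)} → C) :=
      { toFun := fun q w => ⟨q.1.1 (fun j => (ofLex (w.1 j)).1) (fun j => (ofLex (w.1 j)).2), by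
          rw [hC]
          have h := LinearMap.mem_ker.1 q.2
          rw [← hDVa, h]; rfl⟩
        map_add' := by intro p q; rfl
        map_smul' := by intro c q; rfl }
    have hRa : ∀ q w, ((R q w : C) : F) =
      q.1.1 (fun j => (ofLex (w.1 j)).1) (fun j => (ofLex (w.1 j)).2) := fun _ _ => rfl
    have hRinj : Function.Injective R := by
      refine aux_inj R (fun q => ⟨-q, neg_add_cancel q⟩) ?_
      intro q hq
      have hz := aux_skew_uniq (fun w : Fin (k+1) → ℕ ×ₗ Fin l =>
        q.1.1 (fun j => (ofLex (w j)).1) (fun j => (ofLex (w j)).2))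
        (fun σ w => q.1.2.1 σ (fun j => (ofLex (w j)).1) (fun j => (ofLex (w j)).2)) (by
          intro w hw
          by_cases hg : aux_good N (fun j => (ofLex (w j)).1)
          · have := hRa q ⟨w, hw, hg⟩
            rw [hq] at this
            exact this.symm
          · exact q.1.2.2 _ _ hg)
      apply Subtype.ext; apply Subtype.ext; funext m i
      exact hz (fun j => toLex (m j, i j))
    have hRsurj : Function.Surjective R := by
      intro c
      obtain ⟨f, hf1, hf2, hf3⟩ := aux_skew_exists (fun w : Fin (k+1) → ℕ ×ₗ Fin l =>
        if h : StrictMono w ∧ aux_good N (fun j => (ofLex (w j)).1) then ((c ⟨w, h⟩ : C) : F) else 0)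
      refine ⟨⟨⟨fun m i => f (fun j => toLex (m j, i j)), ?_, ?_⟩, ?_⟩, ?_⟩
      · intro σ m i
        exact hf1 σ (fun j => toLex (m j, i j))
      · intro m i hg
        change f (fun j => toLex (m j, i j)) = 0
        rcases hf3 (fun j => toLex (m j, i j)) with h | ⟨σ, hσ, h⟩
        · exact h
        · rw [h, dif_neg, smul_zero]
          rintro ⟨-, hh⟩
          exact hg ((hgp σ m).1 hh)
      · rw [LinearMap.mem_ker]
        apply Subtype.ext; funext m i
        change d (f (fun j => toLex (m j, i j))) = 0
        rcases hf3 (fun j => toLex (m j, i j)) with h | ⟨σ, hσ, h⟩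
        · rw [h, hd0]
        · rw [h, aux_d_zsmul hd]
          split_ifs with hh
          · rw [(hC _).1 (c _).2, smul_zero]
          · rw [hd0, smul_zero]
      · funext w
        apply Subtype.ext
        rw [hRa]
        change f w.1 = _
        rw [hf2 _ w.2.1, dif_pos w.2]
    rw [(LinearEquiv.ofBijective R ⟨hRinj, hRsurj⟩).rank_eq, rank_fun', ← hcard,
      Nat.card_eq_fintype_card]
  rw [← hker, ← hrank]
  -- the map to families
  have hDFa : ∀ (q : V) m i, aux_good N m →
      aux_DF d (fun m => q.1 m i) m = ((DV + AV) q).1 m i := by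
    intro q m i hg
    change _ = d (q.1 m i) + aa q.1 m i
    rw [haa, if_pos hg, aux_DF]
  let T : LinearMap.ker (DV + AV) →ₗ[C]
      ((Fin (k + 1) → Fin (N + 1)) → (Fin (k + 1) → Fin l) → F) :=
    { toFun := fun q m i => aux_DF d (fun m => q.1.1 m i) (fun j => (m j : ℕ))
      map_add' := by
        intro p q
        funext m i
        simp only [aux_DF, Pi.add_apply, Submodule.coe_add, hd.map_add]
        rw [add_add_add_comm, ← Finset.sum_add_distrib]
        congr 1
        apply Finset.sum_congr rfl
        intro j _
        split_ifs <;> simp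
      map_smul' := by
        intro c q
        funext m i
        simp only [aux_DF, Pi.smul_apply, Submodule.coe_smul, hdC, RingHom.id_apply, smul_add,
          Finset.smul_sum]
        congr 1
        apply Finset.sum_congr rfl
        intro j _
        split_ifs <;> simp }
  have hTa : ∀ q m i, T q m i = aux_DF d (fun m => q.1.1 m i) (fun j => (m j : ℕ)) :=
    fun _ _ _ => rfl
  have hkerq : ∀ (q : LinearMap.ker (DV + AV)) m i, aux_good N m →
      aux_DF d (fun m => q.1.1 m i) m = 0 := by
    intro q m i hg
    rw [hDFa q.1 m i hg, LinearMap.mem_ker.1 q.2]; rfl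
  have hTinj : Function.Injective T := by
    refine aux_inj T (fun q => ⟨-q, neg_add_cancel q⟩) ?_
    intro q hq
    apply Subtype.ext; apply Subtype.ext; funext m i
    refine aux_S3 hd (fun m => q.1.1 m i) (fun m => q.1.2.2 m i) (fun m => hkerq q m i) ?_ m
    intro m
    rw [← hTa, hq]; rfl
  have hrange : Sol = LinearMap.range T := by
    ext s
    rw [hSol, LinearMap.mem_range]
    constructor
    · rintro ⟨h1, h2, h3⟩
      obtain ⟨q, hq1, hq2, hq3, hq4⟩ := aux_S2 hd hk s h1 h2 h3
      refine ⟨⟨⟨q, hq1, hq2⟩, ?_⟩, ?_⟩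
      · rw [LinearMap.mem_ker]
        apply Subtype.ext; funext m i
        by_cases hg : aux_good N m
        · rw [← hDFa _ m i hg]
          exact hq3 m i hg
        · exact ((DV + AV) _).2.2 m i hg
      · funext m i
        exact (hq4 m i).symm
    · rintro ⟨q, rfl⟩
      exact aux_S1 hd hk q.1.1 q.1.2.1 q.1.2.2 (hkerq q) _ (fun m i => rfl)
  rw [hrange]
  exact (LinearEquiv.ofInjective T hTinj).rank_eq.symm
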